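/- Assume s > λ_f ≥ 0, 0 < λ̄_F < s, and α > 0. If 1/α ≤ (s − λ_f)·[1 − √(s/(s − λ_f))·(1 − λ̄_F/s)], then Demand Response is preferred over the forward contract: sup_{r ≥ 0} Π_DR(r) ≥ max_{q ∈ [0, d_max]} Π_F(q). -/

import Mathlib

open MeasureTheory Set

/-!
Measure both decisions as fractions `w ≤ 1` of the peak demand `d`: a forward contract of volume
`q = d * w`, or a reward `r = d * w / α`, which abates the demand by `d * w` (a reward above `d / α`
is wasted). With `k = s - lf`, the two profits become `d / 2 * (-k + c * (2 * b * w - w ^ 2))`,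
where `c = s`, `b = 1 - lF / s` for the forward contract and `c = k`, `b = 1 - 1 / α / k` for Demand
Response. Since `2 * b * w - w ^ 2` has maximum `(max b 0) ^ 2` over `w ≥ 0`, comparing the optima
amounts to comparing `s * (max (1 - lF / s) 0) ^ 2` with `k * (max (1 - 1 / α / k) 0) ^ 2`, and
taking square roots gives the condition on `α`.
-/

lemma two_mul_mul_sub_sq_le_max_zero_sq (b : ℝ) {w : ℝ} (hw : 0 ≤ w) :
    2 * b * w - w ^ 2 ≤ max b 0 ^ 2 := by
  have hbw : b * w ≤ max b 0 * w := by
    gcongr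
    exact le_max_left b 0
  linarith [sq_nonneg (w - max b 0)]

lemma two_mul_mul_max_zero_sub_sq (b : ℝ) :
    2 * b * max b 0 - max b 0 ^ 2 = max b 0 ^ 2 := by
  rcases max_cases b 0 with ⟨h, -⟩ | ⟨h, -⟩ <;> rw [h] <;> ring

lemma mul_max_zero_sq_le_mul_max_zero_sq_iff {s k : ℝ} (hs : 0 < s) (hk : 0 < k) (g b : ℝ) :
    s * max g 0 ^ 2 ≤ k * max b 0 ^ 2 ↔ g ≤ 0 ∨ √(s / k) * g ≤ b := by
  have hroot : 0 < √(s / k) := Real.sqrt_pos.2 (div_pos hs hk)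
  have hnonpos : √(s / k) * g ≤ 0 ↔ g ≤ 0 := by
    simpa only [mul_zero] using mul_le_mul_iff_right₀ (b := g) (c := 0) hroot
  calc s * max g 0 ^ 2 ≤ k * max b 0 ^ 2
      ↔ (√(s / k) * max g 0) ^ 2 ≤ max b 0 ^ 2 := by
        rw [mul_pow, Real.sq_sqrt (by positivity), div_mul_eq_mul_div, div_le_iff₀' hk]
    _ ↔ √(s / k) * max g 0 ≤ max b 0 := sq_le_sq₀ (by positivity) (le_max_right b 0)
    _ ↔ √(s / k) * g ≤ b ∨ √(s / k) * g ≤ 0 := by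
        rw [mul_max_of_nonneg _ _ hroot.le, mul_zero, max_le_iff, le_max_iff,
          and_iff_left (le_max_right b 0)]
    _ ↔ g ≤ 0 ∨ √(s / k) * g ≤ b := by
        rw [hnonpos, or_comm]

lemma integral_zero_max_zero (b : ℝ) : ∫ x in (0 : ℝ)..b, max x 0 = max b 0 ^ 2 / 2 := by
  rcases le_total 0 b with hb | hb
  · have hid : EqOn (fun x : ℝ => max x 0) (fun x => x) (uIcc 0 b) := fun x hx =>
      max_eq_left (uIcc_of_le hb ▸ hx).1
    rw [intervalIntegral.integral_congr hid, integral_id, max_eq_left hb]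
    ring
  · have hzero : EqOn (fun x : ℝ => max x 0) (fun _ => 0) (uIcc 0 b) := fun x hx =>
      max_eq_right (uIcc_of_ge hb ▸ hx).2
    rw [intervalIntegral.integral_congr hzero, intervalIntegral.integral_zero, max_eq_right hb]
    ring

lemma integral_max_sub_zero (u v a : ℝ) :
    ∫ x in u..v, max (x - a) 0 = (max (v - a) 0 ^ 2 - max (u - a) 0 ^ 2) / 2 := by
  have hint (c : ℝ) : IntervalIntegrable (fun x : ℝ => max x 0) volume 0 c :=
    (continuous_id.max continuous_const).intervalIntegrable 0 c
  rw [intervalIntegral.integral_comp_sub_right (fun x => max x 0),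
    ← intervalIntegral.integral_interval_sub_left (hint _) (hint _),
    integral_zero_max_zero, integral_zero_max_zero, sub_div]

lemma integral_mul_of_eqOn_const {f : ℝ → ℝ} {a b c : ℝ} (hf : ∀ x ∈ uIcc a b, f x = c)
    (g : ℝ → ℝ) : ∫ x in a..b, g x * f x = (∫ x in a..b, g x) * c := by
  rw [← intervalIntegral.integral_mul_const]
  exact intervalIntegral.integral_congr fun x hx => congrArg (g x * ·) (hf x hx)

/-- The expected profit `Π_F(q)` under a forward contract of volume `q` at unit price `lF`, for a
demand with density `f` on `[0, d]` and mean `μ`, tariff `lf` and mean spot price `s`. -/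
noncomputable def forwardProfit (f : ℝ → ℝ) (d s lf lF μ q : ℝ) : ℝ :=
  lf * μ - lF * q - s * ∫ x in q..d, (x - q) * f x

/-- The expected profit `Π_DR(r)` under Demand Response with elasticity `α` and reward `r`, for a
demand with density `f` on `[0, d]`, tariff `lf` and mean spot price `s`. -/
noncomputable def demandResponseProfit (f : ℝ → ℝ) (d s lf α r : ℝ) : ℝ :=
  (lf - s) * (∫ x in (0 : ℝ)..d, max (x - α * r) 0 * f x) - r

section Uniform

variable {f : ℝ → ℝ} {d s lf lF α : ℝ}

lemma forwardProfit_uniform_mul (hd : 0 < d) (hf : ∀ x ∈ Icc 0 d, f x = 1 / d) (hs : s ≠ 0)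
    {w : ℝ} (hw : w ∈ Icc 0 1) :
    forwardProfit f d s lf lF (d / 2) (d * w) =
      d / 2 * (lf - s + s * (2 * (1 - lF / s) * w - w ^ 2)) := by
  have hq : d * w ∈ Icc 0 d :=
    ⟨mul_nonneg hd.le hw.1, mul_le_of_le_one_right hd.le hw.2⟩
  have hshortfall : ∫ x in d * w..d, (x - d * w) * f x = (d - d * w) ^ 2 / 2 * (1 / d) := by
    rw [integral_mul_of_eqOn_const fun x hx =>
        hf x (uIcc_subset_Icc hq (right_mem_Icc.2 hd.le) hx),
      intervalIntegral.integral_comp_sub_right (fun x => x), integral_id, sub_self]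
    ring
  rw [forwardProfit, hshortfall]
  field

lemma isGreatest_forwardProfit_uniform (hd : 0 < d) (hf : ∀ x ∈ Icc 0 d, f x = 1 / d)
    (hs : 0 < s) (hlF : 0 ≤ lF) :
    IsGreatest (forwardProfit f d s lf lF (d / 2) '' Icc 0 d)
      (d / 2 * (lf - s + s * max (1 - lF / s) 0 ^ 2)) := by
  constructor
  · have hmax : max (1 - lF / s) 0 ∈ Icc (0 : ℝ) 1 :=
      ⟨le_max_right _ _, max_le (sub_le_self 1 (by positivity)) zero_le_one⟩
    refine ⟨d * max (1 - lF / s) 0,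
      ⟨mul_nonneg hd.le hmax.1, mul_le_of_le_one_right hd.le hmax.2⟩, ?_⟩
    rw [forwardProfit_uniform_mul hd hf hs.ne' hmax, two_mul_mul_max_zero_sub_sq]
  · rintro _ ⟨q, hq, rfl⟩
    have hw : q / d ∈ Icc (0 : ℝ) 1 := ⟨div_nonneg hq.1 hd.le, div_le_one_of_le₀ hq.2 hd.le⟩
    rw [← mul_div_cancel₀ q hd.ne', forwardProfit_uniform_mul hd hf hs.ne' hw]
    gcongr
    exact two_mul_mul_sub_sq_le_max_zero_sq _ hw.1

lemma demandResponseProfit_uniform (hd : 0 ≤ d) (hf : ∀ x ∈ Icc 0 d, f x = 1 / d) {r : ℝ}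
    (hr : 0 ≤ α * r) :
    demandResponseProfit f d s lf α r =
      (lf - s) * (max (d - α * r) 0 ^ 2 / 2 * (1 / d)) - r := by
  have hzero : max (0 - α * r) 0 = 0 := max_eq_right (by linarith)
  rw [demandResponseProfit, integral_mul_of_eqOn_const (uIcc_of_le hd ▸ hf),
    integral_max_sub_zero, hzero]
  ring

lemma demandResponseProfit_uniform_mul_div (hd : 0 < d) (hf : ∀ x ∈ Icc 0 d, f x = 1 / d)
    (hk : s - lf ≠ 0) (hα : α ≠ 0) {w : ℝ} (hw : w ∈ Icc 0 1) :
    demandResponseProfit f d s lf α (d * w / α) =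
      d / 2 * (lf - s + (s - lf) * (2 * (1 - 1 / α / (s - lf)) * w - w ^ 2)) := by
  have habated : α * (d * w / α) = d * w := mul_div_cancel₀ _ hα
  have hresidual : max (d - d * w) 0 = d * (1 - w) := by
    rw [max_eq_left (sub_nonneg.2 (mul_le_of_le_one_right hd.le hw.2))]
    ring
  rw [demandResponseProfit_uniform hd.le hf (habated.symm ▸ mul_nonneg hd.le hw.1), habated,
    hresidual]
  field

lemma demandResponseProfit_uniform_le_of_saturated (hd : 0 ≤ d)
    (hf : ∀ x ∈ Icc 0 d, f x = 1 / d) (hα : 0 < α) {r : ℝ} (hr : d ≤ α * r) :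
    demandResponseProfit f d s lf α r ≤ demandResponseProfit f d s lf α (d / α) := by
  have habated : α * (d / α) = d := mul_div_cancel₀ d hα.ne'
  rw [demandResponseProfit_uniform hd hf (hd.trans hr),
    demandResponseProfit_uniform hd hf (habated.symm ▸ hd), habated,
    max_eq_right (sub_nonpos.2 hr), sub_self, max_self]
  gcongr
  exact (div_le_iff₀' hα).2 hr

lemma isGreatest_demandResponseProfit_uniform (hd : 0 < d)
    (hf : ∀ x ∈ Icc 0 d, f x = 1 / d) (hspread : lf < s) (hα : 0 < α) :
    IsGreatest (demandResponseProfit f d s lf α '' Ici 0)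
      (d / 2 * (lf - s + (s - lf) * max (1 - 1 / α / (s - lf)) 0 ^ 2)) := by
  have hk : 0 < s - lf := sub_pos.2 hspread
  have hle {w : ℝ} (hw : w ∈ Icc 0 1) :
      demandResponseProfit f d s lf α (d * w / α) ≤
        d / 2 * (lf - s + (s - lf) * max (1 - 1 / α / (s - lf)) 0 ^ 2) := by
    rw [demandResponseProfit_uniform_mul_div hd hf hk.ne' hα.ne' hw]
    gcongr
    exact two_mul_mul_sub_sq_le_max_zero_sq _ hw.1
  constructor
  · have hmax : max (1 - 1 / α / (s - lf)) 0 ∈ Icc (0 : ℝ) 1 :=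
      ⟨le_max_right _ _, max_le (sub_le_self 1 (by positivity)) zero_le_one⟩
    refine ⟨d * max (1 - 1 / α / (s - lf)) 0 / α, mem_Ici.2 (by positivity), ?_⟩
    rw [demandResponseProfit_uniform_mul_div hd hf hk.ne' hα.ne' hmax,
      two_mul_mul_max_zero_sub_sq]
  · rintro _ ⟨r, hr, rfl⟩
    rcases le_total (α * r) d with hrd | hrd
    · have hw : α * r / d ∈ Icc (0 : ℝ) 1 :=
        ⟨div_nonneg (mul_nonneg hα.le hr) hd.le, div_le_one_of_le₀ hrd hd.le⟩
      have hreward : d * (α * r / d) / α = r := by field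
      simpa only [hreward] using hle hw
    · exact (demandResponseProfit_uniform_le_of_saturated hd.le hf hα hrd).trans <| by
        simpa only [mul_one] using hle (right_mem_Icc.2 zero_le_one)

theorem dr_preferred_over_forward_general (hd : 0 < d) (hf : ∀ x ∈ Icc 0 d, f x = 1 / d)
    (hs : 0 < s) (hspread : lf < s) (hlF : 0 ≤ lF) (hα : 0 < α) :
    sSup (forwardProfit f d s lf lF (d / 2) '' Icc 0 d) ≤
        sSup (demandResponseProfit f d s lf α '' Ici 0) ↔
      s ≤ lF ∨ 1 / α ≤ (s - lf) * (1 - √(s / (s - lf)) * (1 - lF / s)) := by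
  have hk : 0 < s - lf := sub_pos.2 hspread
  rw [(isGreatest_forwardProfit_uniform hd hf hs hlF).csSup_eq,
    (isGreatest_demandResponseProfit_uniform hd hf hspread hα).csSup_eq,
    mul_le_mul_iff_right₀ (half_pos hd), add_le_add_iff_left,
    mul_max_zero_sq_le_mul_max_zero_sq_iff hs hk, sub_nonpos, one_le_div hs,
    le_sub_comm, div_le_iff₀' hk]

end Uniform

/-- Condition under which Demand Response is preferred over the
forward contract (uniform demand on [0,d_max], uniform spot price on [0,2s]). -/
theorem dr_preferred_over_forward
    (f : ℝ → ℝ) (dmax s lf lF α μ : ℝ)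
    (hdmax : 0 < dmax)
    (hf : ∀ x ∈ Set.Icc (0:ℝ) dmax, f x = 1 / dmax)
    (hμ : μ = dmax / 2)
    (hs : 0 < s) (hlf : 0 ≤ lf) (hspread : s > lf)
    (hlF_pos : 0 < lF) (hlF_lt : lF < s)
    (hα : 0 < α)
    (PiF PiDR : ℝ → ℝ)
    (hPiF : ∀ q, PiF q = lf * μ - lF * q - s * ∫ x in q..dmax, (x - q) * f x)
    (hPiDR : ∀ r, PiDR r = (lf - s) * (∫ x in (0:ℝ)..dmax, max (x - α * r) 0 * f x) - r)
    (hcond : 1 / α ≤ (s - lf) * (1 - Real.sqrt (s / (s - lf)) * (1 - lF / s))) :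
    sSup (PiDR '' Set.Ici 0) ≥ sSup (PiF '' Set.Icc 0 dmax) := by
  obtain ⟨rfl, rfl, rfl⟩ : μ = dmax / 2 ∧ PiF = forwardProfit f dmax s lf lF μ ∧
    PiDR = demandResponseProfit f dmax s lf α := ⟨hμ, funext hPiF, funext hPiDR⟩
  exact (dr_preferred_over_forward_general hdmax hf hs hspread hlF_pos.le hα).2 (.inr hcond)
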